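/- For integers p ≥ 0, k ≥ 0 with q > 0, m > 0, n = 0, the integral W^{p,k}_{q,m,0} = ∫_{S²} Y_{p,q} Y_{k,m} Y_{k,0} dS equals δ_{q,m} C_{p,k} (−1)^q (p k k; 0 0 0)(p k k; m −m 0), with C_{p,k} = (2k+1)√(2p+1)/√(4π). -/

import Mathlib

open scoped Real

noncomputable section

/-- Factorial extended to integers: zero for negative arguments. -/
def fact' (z : ℤ) : ℝ := if z < 0 then 0 else (Nat.factorial z.toNat : ℝ)

/-- The Wigner 3-j symbol, defined via the Racah formula. -/
def w3j (l1 l2 l3 : ℕ) (m1 m2 m3 : ℤ) : ℝ :=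
  if m1 + m2 + m3 = 0 ∧ |m1| ≤ (l1 : ℤ) ∧ |m2| ≤ (l2 : ℤ) ∧ |m3| ≤ (l3 : ℤ) ∧
      (l3 : ℤ) ≤ (l1 : ℤ) + (l2 : ℤ) ∧ |(l1 : ℤ) - (l2 : ℤ)| ≤ (l3 : ℤ) then
    (-1 : ℝ) ^ ((l1 : ℤ) - (l2 : ℤ) - m3) *
      Real.sqrt ((fact' ((l1 : ℤ) + l2 - l3) * fact' ((l1 : ℤ) - l2 + l3) *
          fact' (-(l1 : ℤ) + l2 + l3) * fact' ((l1 : ℤ) - m1) * fact' ((l1 : ℤ) + m1) *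
          fact' ((l2 : ℤ) - m2) * fact' ((l2 : ℤ) + m2) * fact' ((l3 : ℤ) - m3) *
          fact' ((l3 : ℤ) + m3)) / fact' ((l1 : ℤ) + l2 + l3 + 1)) *
      ∑ t ∈ Finset.range (l1 + l2 + l3 + 1),
        (-1 : ℝ) ^ t /
          (fact' t * fact' ((l3 : ℤ) - l2 + m1 + t) * fact' ((l3 : ℤ) - l1 - m2 + t) *
            fact' ((l1 : ℤ) + l2 - l3 - t) * fact' ((l1 : ℤ) - m1 - t) *
            fact' ((l2 : ℤ) + m2 - t))
  else 0

/-- Associated Legendre function via the Rodrigues formula. -/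
def assocLegendre (l : ℕ) (m : ℤ) (x : ℝ) : ℝ :=
  ((-1 : ℝ) ^ m / ((2 : ℝ) ^ l * (Nat.factorial l : ℝ))) * (1 - x ^ 2) ^ ((m : ℝ) / 2) *
    iteratedDeriv (m + l).toNat (fun y : ℝ => (y ^ 2 - 1) ^ l) x

/-- Complex spherical harmonic of degree `l` and order `m`. -/
def Ysph (l : ℕ) (m : ℤ) (θ φ : ℝ) : ℂ :=
  ((Real.sqrt ((2 * l + 1) / (4 * Real.pi) * (fact' ((l : ℤ) - m) / fact' ((l : ℤ) + m))) *
      assocLegendre l m (Real.cos θ) : ℝ) : ℂ) * Complex.exp (Complex.I * m * φ)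

/-- Real spherical harmonic of degree `l` and order `m`. -/
def Yre (l : ℕ) (m : ℤ) (θ φ : ℝ) : ℝ :=
  if m < 0 then
    (Complex.I / (Real.sqrt 2 : ℂ) * (Ysph l m θ φ - (-1 : ℂ) ^ m * Ysph l (-m) θ φ)).re
  else if m = 0 then (Ysph l 0 θ φ).re
  else ((1 / (Real.sqrt 2 : ℂ)) * (Ysph l (-m) θ φ + (-1 : ℂ) ^ m * Ysph l m θ φ)).re

/-- Integral over the unit sphere in spherical coordinates, `dS = sin θ dφ dθ`. -/
def sphInt (f : ℝ → ℝ → ℝ) : ℝ :=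
  ∫ θ in (0 : ℝ)..Real.pi, ∫ φ in (0 : ℝ)..(2 * Real.pi), f θ φ * Real.sin θ

end

/-!
In the azimuthal angle the integrand is `cos (q φ) cos (m φ)`, whose integral gives the Kronecker
delta. What remains is Gaunt's integral of three associated Legendre functions whose orders sum to
zero. As functions of the orders, this integral and the alternating sum in Racah's formula satisfy
the same lowering relations (for the integral, because `(x ^ 2 - 1) P` vanishes at `± 1`), and these
determine a solution from its values at the top order `m₁ = l₁`. There, integration by parts shows
that the two solutions are proportional. The constant of proportionality is identified with the 3-j
symbol of zero orders through Dixon's identity.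
-/

/-! ### Racah's sum and Dixon's identity -/

/-- The reciprocal factorial on `ℤ`. Being `0` at negative arguments, it cuts off by itself the
sums and the derivative orders that range over all integers. -/
noncomputable def rfact (z : ℤ) : ℝ := (fact' z)⁻¹

theorem fact'_natCast (n : ℕ) : fact' n = n.factorial := by
  simp [fact']

theorem fact'_nonneg (z : ℤ) : 0 ≤ fact' z := by
  unfold fact'
  positivity

theorem fact'_pos {z : ℤ} (hz : 0 ≤ z) : 0 < fact' z := by
  lift z to ℕ using hz
  rw [fact'_natCast]
  exact_mod_cast z.factorial_pos

theorem rfact_natCast (n : ℕ) : rfact n = (n.factorial : ℝ)⁻¹ := by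
  rw [rfact, fact'_natCast]

theorem rfact_zero : rfact 0 = 1 := by
  simpa using rfact_natCast 0

theorem rfact_of_neg {z : ℤ} (hz : z < 0) : rfact z = 0 := by
  simp [rfact, fact', hz]

theorem rfact_sub_one (z : ℤ) : rfact (z - 1) = z * rfact z := by
  rcases lt_trichotomy z 0 with hz | rfl | hz
  · rw [rfact_of_neg hz, rfact_of_neg (by lia), mul_zero]
  · rw [rfact_of_neg (by lia), Int.cast_zero, zero_mul]
  · obtain ⟨n, rfl⟩ : ∃ n : ℕ, z = (n + 1 : ℕ) := ⟨(z - 1).toNat, by lia⟩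
    rw [Nat.cast_succ, add_sub_cancel_right, ← Nat.cast_succ, rfact_natCast, rfact_natCast,
      Nat.factorial_succ]
    push_cast
    field_simp

theorem rfact_eq_mul_rfact_add_one (z : ℤ) : rfact z = (z + 1) * rfact (z + 1) := by
  simpa using rfact_sub_one (z + 1)

/-- The summand of Racah's formula for the 3-j symbol of orders `m₁`, `m₂`, `-m₁ - m₂`. -/
noncomputable def racahTerm (l₁ l₂ l₃ : ℕ) (m₁ m₂ : ℤ) (t : ℕ) : ℝ :=
  (-1) ^ t * (rfact t * rfact (l₃ - l₂ + m₁ + t) * rfact (l₃ - l₁ - m₂ + t) *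
    rfact (l₁ + l₂ - l₃ - t) * rfact (l₁ - m₁ - t) * rfact (l₂ + m₂ - t))

/-- The alternating sum in Racah's formula for the 3-j symbol of orders `m₁`, `m₂`, `-m₁ - m₂`. -/
noncomputable def racahSum (l₁ l₂ l₃ : ℕ) (m₁ m₂ : ℤ) : ℝ :=
  ∑ t ∈ Finset.range (l₁ + l₂ + l₃ + 1), racahTerm l₁ l₂ l₃ m₁ m₂ t

/-- The lowering relations for coefficients indexed by orders `m₁`, `m₂`, `-m₁ - m₂`: up to
rescaling, the statement that the coupled state is annihilated by the total lowering operator. -/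
def IsLowering (l₁ l₂ l₃ : ℕ) (E : ℤ → ℤ → ℝ) : Prop :=
  ∀ m₁ m₂ : ℤ, (l₁ - m₁ + 1) * E (m₁ - 1) m₂ + (l₂ - m₂ + 1) * E m₁ (m₂ - 1) =
    (l₃ + m₁ + m₂) * E m₁ m₂

theorem IsLowering.eq_of_eq_top {l₁ l₂ l₃ : ℕ} {E F : ℤ → ℤ → ℝ} (hE : IsLowering l₁ l₂ l₃ E)
    (hF : IsLowering l₁ l₂ l₃ F) (htop : ∀ m₂, E l₁ m₂ = F l₁ m₂) {m₁ : ℤ} (hm₁ : m₁ ≤ l₁)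
    (m₂ : ℤ) : E m₁ m₂ = F m₁ m₂ := by
  induction m₁, hm₁ using Int.leInductionDown generalizing m₂ with
  | base => exact htop m₂
  | pred m₁ hm₁ ih =>
    have hne : (l₁ - m₁ + 1 : ℝ) ≠ 0 := by
      have : (m₁ : ℝ) ≤ l₁ := by exact_mod_cast hm₁
      linarith
    apply mul_left_cancel₀ hne
    linear_combination hE m₁ m₂ - hF m₁ m₂ - (l₂ - m₂ + 1) * ih (m₂ - 1) + (l₃ + m₁ + m₂) * ih m₂

theorem IsLowering.const_mul {l₁ l₂ l₃ : ℕ} {E : ℤ → ℤ → ℝ} (hE : IsLowering l₁ l₂ l₃ E) (c : ℝ) :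
    IsLowering l₁ l₂ l₃ fun m₁ m₂ ↦ c * E m₁ m₂ := by
  intro m₁ m₂
  linear_combination c * hE m₁ m₂

theorem rfact_lowering (t a b c d e : ℤ) :
    (d + t + 1) * (rfact t * rfact (a - 1) * rfact b * rfact c * rfact (d + 1) * rfact e) +
      (b + c + 1) * (rfact t * rfact a * rfact (b + 1) * rfact c * rfact d * rfact (e - 1)) -
      (a + e) * (rfact t * rfact a * rfact b * rfact c * rfact d * rfact e) =
    rfact (t - 1) * rfact (a - 1) * rfact b * rfact c * rfact (d + 1) * rfact e +
      rfact t * rfact a * rfact (b + 1) * rfact (c - 1) * rfact d * rfact (e - 1) := by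
  simp only [rfact_sub_one]
  rw [rfact_eq_mul_rfact_add_one b, rfact_eq_mul_rfact_add_one d]
  ring

theorem isLowering_racahSum (l₁ l₂ l₃ : ℕ) : IsLowering l₁ l₂ l₃ (racahSum l₁ l₂ l₃) := by
  intro m₁ m₂
  let A (t : ℕ) : ℝ := (-1) ^ t * (rfact (t - 1) * rfact (l₃ - l₂ + m₁ + t - 1) *
    rfact (l₃ - l₁ - m₂ + t) * rfact (l₁ + l₂ - l₃ - t) * rfact (l₁ - m₁ - t + 1) *
    rfact (l₂ + m₂ - t))
  have htelescope (t : ℕ) : (l₁ - m₁ + 1) * racahTerm l₁ l₂ l₃ (m₁ - 1) m₂ t +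
      (l₂ - m₂ + 1) * racahTerm l₁ l₂ l₃ m₁ (m₂ - 1) t -
      (l₃ + m₁ + m₂) * racahTerm l₁ l₂ l₃ m₁ m₂ t = A t - A (t + 1) := by
    simp only [racahTerm, A]
    linear_combination (norm := (push_cast; ring_nf)) (-1) ^ t * rfact_lowering t
      (l₃ - l₂ + m₁ + t) (l₃ - l₁ - m₂ + t) (l₁ + l₂ - l₃ - t) (l₁ - m₁ - t) (l₂ + m₂ - t)
  have hfirst : A 0 = 0 := by
    simp [A, rfact_of_neg]
  have hlast : A (l₁ + l₂ + l₃ + 1) = 0 := by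
    simp only [A]
    rw [rfact_of_neg (z := l₁ + l₂ - l₃ - (l₁ + l₂ + l₃ + 1 : ℕ)) (by lia)]
    ring
  rw [← sub_eq_zero]
  simp only [racahSum]
  rw [Finset.mul_sum, Finset.mul_sum, Finset.mul_sum, ← Finset.sum_add_distrib,
    ← Finset.sum_sub_distrib, Finset.sum_congr rfl fun t _ ↦ htelescope t, Finset.sum_range_sub',
    hfirst, hlast, sub_zero]

theorem racahSum_top (l₁ l₂ l₃ : ℕ) (m₂ : ℤ) :
    racahSum l₁ l₂ l₃ l₁ m₂ = rfact (l₁ - l₂ + l₃) * rfact (l₃ - l₁ - m₂) *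
      rfact (l₁ + l₂ - l₃) * rfact (l₂ + m₂) := by
  rw [racahSum, Finset.sum_range_succ', Finset.sum_eq_zero fun t _ ↦ ?_]
  · simp only [racahTerm, Nat.cast_zero, rfact_zero, sub_self, sub_zero, add_zero]
    ring_nf
  · rw [racahTerm, rfact_of_neg (z := l₁ - l₁ - (t + 1 : ℕ)) (by lia)]
    ring

theorem racahSum_eq_sum_range {l₁ l₂ l₃ d : ℕ} (hd : l₁ + l₂ = l₃ + d) (m₁ m₂ : ℤ) :
    racahSum l₁ l₂ l₃ m₁ m₂ = ∑ t ∈ Finset.range (d + 1), racahTerm l₁ l₂ l₃ m₁ m₂ t := by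
  refine (Finset.sum_subset (Finset.range_subset_range.2 (by lia)) fun t _ ht ↦ ?_).symm
  rw [Finset.mem_range] at ht
  rw [racahTerm, rfact_of_neg (z := l₁ + l₂ - l₃ - t) (by lia)]
  ring

theorem racahSum_neg_neg {l₁ l₂ l₃ : ℕ} (h : l₃ ≤ l₁ + l₂) (m₁ m₂ : ℤ) :
    racahSum l₁ l₂ l₃ (-m₁) (-m₂) = (-1) ^ (l₁ + l₂ + l₃) * racahSum l₁ l₂ l₃ m₁ m₂ := by
  obtain ⟨d, hd⟩ := Nat.exists_eq_add_of_le h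
  rw [racahSum_eq_sum_range hd, racahSum_eq_sum_range hd, ← Finset.sum_range_reflect,
    Finset.mul_sum]
  refine Finset.sum_congr rfl fun t ht ↦ ?_
  obtain ⟨u, rfl⟩ : ∃ u, d = t + u := Nat.exists_eq_add_of_le (by grind)
  have hsign : (-1 : ℝ) ^ (l₁ + l₂ + l₃) * (-1) ^ t = (-1) ^ u := by
    rw [← pow_add, show l₁ + l₂ + l₃ + t = 2 * (l₃ + t) + u by lia, pow_add, pow_mul, neg_one_sq,
      one_pow, one_mul]
  rw [show t + u + 1 - 1 - t = u by lia, racahTerm, racahTerm, ← hsign,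
    show (l₃ - l₂ + -m₁ + u : ℤ) = l₁ - m₁ - t by lia,
    show (l₃ - l₁ - -m₂ + u : ℤ) = l₂ + m₂ - t by lia,
    show (l₁ + l₂ - l₃ - u : ℤ) = t by lia, show (l₁ + l₂ - l₃ - t : ℤ) = u by lia,
    show (l₁ - -m₁ - u : ℤ) = l₃ - l₂ + m₁ + t by lia,
    show (l₂ + -m₂ - u : ℤ) = l₃ - l₁ - m₂ + t by lia]
  ring

theorem racahSum_zero_zero_of_odd {l₁ l₂ l₃ : ℕ} (h : l₃ ≤ l₁ + l₂) (hodd : Odd (l₁ + l₂ + l₃)) :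
    racahSum l₁ l₂ l₃ 0 0 = 0 := by
  have hsymm := racahSum_neg_neg h 0 0
  rw [neg_zero, hodd.neg_one_pow, neg_one_mul] at hsymm
  exact self_eq_neg.1 hsymm

/-- The summand of Dixon's identity, divided by `(a + b)! (b + c)! (c + a)!`. -/
noncomputable def dixonTerm (a b c : ℕ) (u : ℤ) : ℝ :=
  (-1) ^ u * (rfact (a + u) * rfact (a - u) * rfact (b + u) * rfact (b - u) * rfact (c + u) *
    rfact (c - u))

theorem sum_dixonTerm_succ (a b c : ℕ) :
    (a + 1) * (a + b + 1) * (a + c + 1) *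
        ∑ t ∈ Finset.range (2 * c + 1), dixonTerm (a + 1) b c (t - c) =
      (a + b + c + 1) * ∑ t ∈ Finset.range (2 * c + 1), dixonTerm a b c (t - c) := by
  -- The certificate found by Zeilberger's algorithm.
  let A (u : ℤ) : ℝ := (-1) ^ u / 2 * (rfact (a + u) * rfact (a - u + 1) * rfact (b + u - 1) *
    rfact (b - u) * rfact (c + u - 1) * rfact (c - u))
  have htelescope (u : ℤ) : (a + 1) * (a + b + 1) * (a + c + 1) * dixonTerm (a + 1) b c u -
      (a + b + c + 1) * dixonTerm a b c u = A u - A (u + 1) := by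
    simp only [dixonTerm, A]
    rw [show ((a + 1 : ℕ) + u : ℤ) = a + u + 1 by lia,
      show ((a + 1 : ℕ) - u : ℤ) = a - u + 1 by lia, show (a + (u + 1) : ℤ) = a + u + 1 by lia,
      show (a - (u + 1) + 1 : ℤ) = a - u by lia, show (b + (u + 1) - 1 : ℤ) = b + u by lia,
      show (b - (u + 1) : ℤ) = b - u - 1 by lia, show (c + (u + 1) - 1 : ℤ) = c + u by lia,
      show (c - (u + 1) : ℤ) = c - u - 1 by lia, zpow_add_one₀ (by norm_num),
      rfact_eq_mul_rfact_add_one (a + u), rfact_eq_mul_rfact_add_one (a - u)]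
    simp only [rfact_sub_one]
    push_cast
    ring
  have hfirst : A ((0 : ℕ) - c) = 0 := by
    simp [A, rfact_of_neg]
  have hlast : A ((2 * c + 1 : ℕ) - c) = 0 := by
    simp only [A]
    rw [rfact_of_neg (z := c - ((2 * c + 1 : ℕ) - c)) (by lia)]
    ring
  rw [← sub_eq_zero, Finset.mul_sum, Finset.mul_sum, ← Finset.sum_sub_distrib]
  calc
    _ = ∑ t ∈ Finset.range (2 * c + 1), (A ((t : ℕ) - c) - A ((t + 1 : ℕ) - c)) := by
      refine Finset.sum_congr rfl fun t _ ↦ ?_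
      rw [htelescope, show ((t + 1 : ℕ) - c : ℤ) = t - c + 1 by lia]
    _ = 0 := by
      rw [Finset.sum_range_sub' (fun t : ℕ ↦ A (t - c)), hfirst, hlast, sub_zero]

theorem sum_dixonTerm (a b c : ℕ) :
    ∑ t ∈ Finset.range (2 * c + 1), dixonTerm a b c (t - c) = (a + b + c).factorial /
      (a.factorial * b.factorial * c.factorial * (a + b).factorial * (b + c).factorial *
        (a + c).factorial : ℝ) := by
  induction a with
  | zero =>
    rw [Finset.sum_eq_single c]
    · simp only [dixonTerm, sub_self, add_zero, sub_zero, zpow_zero, rfact_natCast, zero_add,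
        Nat.factorial_zero]
      push_cast
      field_simp
    · intro t _ htc
      have hpair : rfact ((0 : ℕ) + (t - c)) * rfact ((0 : ℕ) - (t - c)) = 0 := by
        rcases lt_or_gt_of_ne htc with h | h
        · rw [rfact_of_neg (by lia), zero_mul]
        · rw [rfact_of_neg (z := (0 : ℕ) - (t - c)) (by lia), mul_zero]
      rw [dixonTerm, hpair]
      ring
    · intro hc
      exact absurd (Finset.mem_range.2 (by lia)) hc
  | succ a ih =>
    have hne : ((a : ℝ) + 1) * (a + b + 1) * (a + c + 1) ≠ 0 := by positivity
    apply mul_left_cancel₀ hne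
    rw [sum_dixonTerm_succ, ih, show a + 1 + b + c = a + b + c + 1 by lia,
      show a + 1 + b = a + b + 1 by lia, show a + 1 + c = a + c + 1 by lia]
    simp only [Nat.factorial_succ]
    push_cast
    field_simp

theorem racahSum_zero_zero (a b c : ℕ) :
    racahSum (b + c) (a + c) (a + b) 0 0 = (-1) ^ c * (a + b + c).factorial /
      (a.factorial * b.factorial * c.factorial * (a + b).factorial * (b + c).factorial *
        (a + c).factorial : ℝ) := by
  have hterm (t : ℕ) : racahTerm (b + c) (a + c) (a + b) 0 0 t =
      (-1) ^ c * dixonTerm a b c (t - c) := by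
    have hsign : (-1 : ℝ) ^ c * (-1) ^ (t - c : ℤ) = (-1) ^ t := by
      rw [← zpow_natCast, ← zpow_add₀ (by norm_num), add_sub_cancel, zpow_natCast]
    rw [racahTerm, dixonTerm, ← hsign]
    push_cast
    ring_nf
  rw [racahSum_eq_sum_range (d := 2 * c) (by lia), Finset.sum_congr rfl fun t _ ↦ hterm t,
    ← Finset.mul_sum, sum_dixonTerm, mul_div_assoc]

/-! ### Divided derivatives of `(X ^ 2 - 1) ^ l` -/

section Rodrigues

open Polynomial

/-- The divided derivative `D ^ z / z!` of `(X ^ 2 - 1) ^ l`, zero for `z < 0`. Up to a constant and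
a power of `1 - X ^ 2` it is the associated Legendre function of degree `l` and order `z - l`. -/
noncomputable def rodrigues (l : ℕ) (z : ℤ) : ℝ[X] :=
  if z < 0 then 0 else hasseDeriv z.toNat ((X ^ 2 - 1) ^ l)

theorem rodrigues_of_neg (l : ℕ) {z : ℤ} (hz : z < 0) : rodrigues l z = 0 :=
  if_pos hz

theorem rodrigues_natCast (l n : ℕ) : rodrigues l n = hasseDeriv n ((X ^ 2 - 1) ^ l) := by
  simp [rodrigues]

theorem rodrigues_zero (l : ℕ) : rodrigues l 0 = (X ^ 2 - 1) ^ l := by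
  simpa using rodrigues_natCast l 0

theorem rodrigues_two_mul (l : ℕ) : rodrigues l (2 * l : ℕ) = 1 := by
  have hmonic : ((X ^ 2 - 1 : ℝ[X]) ^ l).Monic := (monic_X_pow_sub_C 1 two_ne_zero).pow l
  have hdeg : ((X ^ 2 - 1 : ℝ[X]) ^ l).natDegree = 2 * l := by
    rw [natDegree_pow, ← C_1, natDegree_X_pow_sub_C, mul_comm]
  rw [rodrigues_natCast, ← hdeg, hasseDeriv_natDegree_eq_C, hmonic.leadingCoeff, C_1]

theorem derivative_rodrigues (l : ℕ) (z : ℤ) :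
    derivative (rodrigues l z) = (z + 1) * rodrigues l (z + 1) := by
  rcases lt_or_ge z 0 with hz | hz
  · obtain rfl | hz' : z = -1 ∨ z + 1 < 0 := by lia
    · simp [rodrigues_of_neg]
    · rw [rodrigues_of_neg l hz, rodrigues_of_neg l hz', derivative_zero, mul_zero]
  · lift z to ℕ using hz
    have h := LinearMap.congr_fun (hasseDeriv_comp 1 z) ((X ^ 2 - 1 : ℝ[X]) ^ l)
    rw [LinearMap.comp_apply, hasseDeriv_one, ← rodrigues_natCast] at h
    rw [h, LinearMap.smul_apply, Nat.choose_one_right, add_comm 1 z, ← rodrigues_natCast,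
      nsmul_eq_mul]
    push_cast
    rfl

theorem derivative_sq_sub_one_pow_succ (l : ℕ) :
    derivative ((X ^ 2 - 1 : ℝ[X]) ^ (l + 1)) = (2 * (l + 1) : ℝ[X]) * X * (X ^ 2 - 1) ^ l := by
  rw [derivative_pow_succ, derivative_sub, derivative_X_sq, derivative_one, C_add, C_1, C_ofNat,
    map_natCast]
  ring

theorem sq_sub_one_mul_derivative_pow (l : ℕ) :
    (X ^ 2 - 1) * derivative ((X ^ 2 - 1 : ℝ[X]) ^ l) = (2 * l : ℝ[X]) * X * (X ^ 2 - 1) ^ l := by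
  cases l with
  | zero => simp
  | succ l =>
    rw [derivative_sq_sub_one_pow_succ]
    push_cast
    ring

theorem rodrigues_recurrence (l : ℕ) (z : ℤ) :
    (2 * l + 1 - z : ℝ[X]) * rodrigues l (z - 1) =
      (z + 1 : ℝ[X]) * (X ^ 2 - 1) * rodrigues l (z + 1) +
        2 * (z - l : ℝ[X]) * X * rodrigues l z := by
  rcases lt_or_ge z 0 with hz | hz
  · obtain rfl | hz' : z = -1 ∨ z + 1 < 0 := by lia
    · simp [rodrigues_of_neg]
    · simp [rodrigues_of_neg, hz, hz', show z < 1 by lia]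
  induction z, hz using Int.leInduction with
  | base =>
    have h := derivative_rodrigues l 0
    have h' := sq_sub_one_mul_derivative_pow l
    rw [rodrigues_of_neg l (by lia)]
    rw [rodrigues_zero] at h ⊢
    push_cast at h ⊢
    linear_combination (X ^ 2 - 1) * h - h'
  | succ z hz ih =>
    have hne : (z + 1 : ℝ[X]) ≠ 0 := by
      exact_mod_cast (by lia : z + 1 ≠ 0)
    apply mul_left_cancel₀ hne
    have h := congrArg derivative ih
    simp only [derivative_mul, derivative_add, derivative_sub, derivative_rodrigues,
      derivative_X_sq, derivative_X, derivative_intCast, derivative_natCast, derivative_one,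
      derivative_ofNat, C_ofNat, sub_add_cancel] at h
    rw [add_sub_cancel_right]
    push_cast at h ⊢
    linear_combination h

theorem rodrigues_sub (l m : ℕ) :
    rodrigues l (l - m) = (X ^ 2 - 1) ^ m * rodrigues l (l + m) := by
  induction m using Nat.twoStepInduction with
  | zero => simp
  | one =>
    have hne : (l + 1 : ℝ[X]) ≠ 0 := by exact_mod_cast l.succ_ne_zero
    apply mul_left_cancel₀ hne
    have h := rodrigues_recurrence l l
    push_cast at h ⊢
    linear_combination h
  | more m ih₀ ih₁ =>
    have hne : (l + m + 2 : ℝ[X]) ≠ 0 := by exact_mod_cast (l + m + 1).succ_ne_zero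
    apply mul_left_cancel₀ hne
    have hsub := rodrigues_recurrence l (l - (m + 1 : ℕ))
    have hadd := rodrigues_recurrence l (l + (m + 1 : ℕ))
    rw [show (l - (m + 1 : ℕ) - 1 : ℤ) = l - (m + 2 : ℕ) by lia,
      show (l - (m + 1 : ℕ) + 1 : ℤ) = l - m by lia, ih₀, ih₁] at hsub
    rw [show (l + (m + 1 : ℕ) - 1 : ℤ) = l + m by lia,
      show (l + (m + 1 : ℕ) + 1 : ℤ) = l + (m + 2 : ℕ) by lia] at hadd
    push_cast at hsub hadd ⊢
    linear_combination hsub + (X ^ 2 - 1) ^ (m + 1) * hadd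

theorem rodrigues_add_two (l n : ℕ) :
    ((n + 1) * (n + 2) : ℝ[X]) * rodrigues (l + 2) (n + 2) =
      (2 * (l + 2) * (2 * l + 3) : ℝ[X]) * rodrigues (l + 1) n +
        (4 * (l + 2) * (l + 1) : ℝ[X]) * rodrigues l n := by
  induction n with
  | zero =>
    have h₁ := derivative_rodrigues (l + 2) 0
    have h₂ := congrArg derivative h₁
    rw [rodrigues_zero, derivative_sq_sub_one_pow_succ] at h₂
    simp only [derivative_mul, derivative_sq_sub_one_pow_succ, derivative_rodrigues,
      derivative_add, derivative_X, derivative_natCast, derivative_ofNat, derivative_one,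
      derivative_intCast, Int.reduceAdd] at h₂
    simp only [Nat.cast_zero, zero_add, rodrigues_zero]
    push_cast at h₂
    linear_combination -h₂
  | succ n ih =>
    have hne : (n + 1 : ℝ[X]) ≠ 0 := by exact_mod_cast n.succ_ne_zero
    apply mul_left_cancel₀ hne
    have h := congrArg derivative ih
    simp only [derivative_mul, derivative_add, derivative_rodrigues, derivative_natCast,
      derivative_ofNat, derivative_one] at h
    rw [show (n + 2 + 1 : ℤ) = (n + 1 : ℕ) + 2 by lia] at h
    push_cast at h ⊢
    linear_combination h

theorem rodrigues_comp_neg_X (l n : ℕ) :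
    (rodrigues l n).comp (-X) = (-1) ^ n * rodrigues l n := by
  induction n with
  | zero => simp [rodrigues_zero]
  | succ n ih =>
    have hne : (n + 1 : ℝ[X]) ≠ 0 := by exact_mod_cast n.succ_ne_zero
    apply mul_left_cancel₀ hne
    have h := congrArg derivative ih
    have hsign : derivative ((-1 : ℝ[X]) ^ n) = 0 := by
      exact_mod_cast derivative_intCast (n := (-1) ^ n)
    rw [derivative_comp, derivative_mul, hsign, derivative_rodrigues, derivative_neg, derivative_X,
      mul_comp, add_comp, one_comp, intCast_comp] at h
    push_cast at h ⊢
    linear_combination -h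

theorem eval_rodrigues_eq_zero {l : ℕ} {z : ℤ} (hz : z < l) {x : ℝ} (hx : x ^ 2 = 1) :
    (rodrigues l z).eval x = 0 := by
  obtain ⟨m, rfl⟩ : ∃ m : ℕ, z = l - (m + 1 : ℕ) := ⟨(l - z - 1).toNat, by lia⟩
  rw [rodrigues_sub, eval_mul, eval_pow]
  simp [hx]

/-! ### Polynomial integrals over `[-1, 1]` -/

/-- The integral of a polynomial over `[-1, 1]`. -/
noncomputable def polyInt : ℝ[X] →ₗ[ℝ] ℝ where
  toFun f := ∫ x in (-1 : ℝ)..1, f.eval x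
  map_add' f g := by
    simp only [eval_add]
    exact intervalIntegral.integral_add (f.continuous.intervalIntegrable _ _)
      (g.continuous.intervalIntegrable _ _)
  map_smul' a f := by
    simp only [eval_smul, intervalIntegral.integral_smul, RingHom.id_apply]

theorem polyInt_apply (f : ℝ[X]) : polyInt f = ∫ x in (-1 : ℝ)..1, f.eval x :=
  rfl

theorem polyInt_intCast_mul (z : ℤ) (f : ℝ[X]) : polyInt (z * f) = z * polyInt f := by
  rw [← zsmul_eq_mul, map_zsmul, zsmul_eq_mul]

theorem polyInt_derivative (f : ℝ[X]) : polyInt (derivative f) = f.eval 1 - f.eval (-1) :=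
  intervalIntegral.integral_eq_sub_of_hasDerivAt (fun x _ ↦ f.hasDerivAt x)
    ((derivative f).continuous.intervalIntegrable _ _)

theorem polyInt_comp_neg_X (f : ℝ[X]) : polyInt (f.comp (-X)) = polyInt f := by
  simp only [polyInt_apply, eval_comp, eval_neg, eval_X]
  rw [intervalIntegral.integral_comp_neg (fun x ↦ f.eval x), neg_neg]

/-- The integral over `[-1, 1]` of a product of three divided derivatives. -/
noncomputable def tripleInt (l₁ l₂ l₃ : ℕ) (z₁ z₂ z₃ : ℤ) : ℝ :=
  polyInt (rodrigues l₁ z₁ * rodrigues l₂ z₂ * rodrigues l₃ z₃)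

theorem tripleInt_swap (l₁ l₂ l₃ : ℕ) (z₁ z₂ z₃ : ℤ) :
    tripleInt l₁ l₂ l₃ z₁ z₂ z₃ = tripleInt l₂ l₁ l₃ z₂ z₁ z₃ := by
  rw [tripleInt, tripleInt, mul_comm (rodrigues l₁ z₁)]

theorem tripleInt_rotate (l₁ l₂ l₃ : ℕ) (z₁ z₂ z₃ : ℤ) :
    tripleInt l₁ l₂ l₃ z₁ z₂ z₃ = tripleInt l₃ l₁ l₂ z₃ z₁ z₂ := by
  rw [tripleInt, tripleInt, mul_rotate, mul_rotate]

-- The left-hand side is the integral of the derivative of `(X ^ 2 - 1)` times the product.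
theorem tripleInt_lowering {l₁ l₂ l₃ : ℕ} {z₁ z₂ z₃ : ℤ} (h : z₁ + z₂ + z₃ = l₁ + l₂ + l₃ + 1) :
    (2 * l₁ + 1 - z₁) * tripleInt l₁ l₂ l₃ (z₁ - 1) z₂ z₃ +
      (2 * l₂ + 1 - z₂) * tripleInt l₁ l₂ l₃ z₁ (z₂ - 1) z₃ +
      (2 * l₃ + 1 - z₃) * tripleInt l₁ l₂ l₃ z₁ z₂ (z₃ - 1) = 0 := by
  let P := rodrigues l₁ z₁ * rodrigues l₂ z₂ * rodrigues l₃ z₃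
  have h' : (z₁ + z₂ + z₃ : ℝ[X]) = l₁ + l₂ + l₃ + 1 := by exact_mod_cast h
  have hderiv :
      ((2 * l₁ + 1 - z₁ : ℤ) : ℝ[X]) * (rodrigues l₁ (z₁ - 1) * rodrigues l₂ z₂ * rodrigues l₃ z₃) +
      ((2 * l₂ + 1 - z₂ : ℤ) : ℝ[X]) * (rodrigues l₁ z₁ * rodrigues l₂ (z₂ - 1) * rodrigues l₃ z₃) +
      ((2 * l₃ + 1 - z₃ : ℤ) : ℝ[X]) * (rodrigues l₁ z₁ * rodrigues l₂ z₂ * rodrigues l₃ (z₃ - 1)) =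
      derivative ((X ^ 2 - 1) * P) := by
    simp only [P, derivative_mul, derivative_rodrigues, derivative_sub, derivative_X_sq,
      derivative_one, C_ofNat]
    push_cast
    linear_combination rodrigues_recurrence l₁ z₁ * rodrigues l₂ z₂ * rodrigues l₃ z₃ +
      rodrigues l₁ z₁ * rodrigues_recurrence l₂ z₂ * rodrigues l₃ z₃ +
      rodrigues l₁ z₁ * rodrigues l₂ z₂ * rodrigues_recurrence l₃ z₃ + 2 * X * P * h'
  have hint := congrArg polyInt hderiv
  simp only [map_add, polyInt_intCast_mul, polyInt_derivative, eval_mul, eval_sub, eval_pow, eval_X,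
    eval_one] at hint
  push_cast at hint
  simp only [tripleInt]
  linear_combination hint

theorem isLowering_tripleInt (l₁ l₂ l₃ : ℕ) : IsLowering l₁ l₂ l₃ fun m₁ m₂ ↦
    (-1) ^ (m₁ + m₂) * tripleInt l₁ l₂ l₃ (l₁ + m₁) (l₂ + m₂) (l₃ - m₁ - m₂) := by
  intro m₁ m₂
  have h := tripleInt_lowering (l₁ := l₁) (l₂ := l₂) (l₃ := l₃) (z₁ := l₁ + m₁) (z₂ := l₂ + m₂)
    (z₃ := l₃ - m₁ - m₂ + 1) (by lia)
  have hsign : (-1 : ℝ) ^ (m₁ + m₂ - 1) = -(-1) ^ (m₁ + m₂) := by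
    rw [zpow_sub_one₀ (by norm_num)]
    norm_num
  rw [add_sub_cancel_right] at h
  simp only [show m₁ - 1 + m₂ = m₁ + m₂ - 1 by lia, show m₁ + (m₂ - 1) = m₁ + m₂ - 1 by lia, hsign,
    show l₁ + (m₁ - 1) = l₁ + m₁ - 1 by lia, show l₂ + (m₂ - 1) = l₂ + m₂ - 1 by lia,
    show l₃ - (m₁ - 1) - m₂ = l₃ - m₁ - m₂ + 1 by lia,
    show l₃ - m₁ - (m₂ - 1) = l₃ - m₁ - m₂ + 1 by lia]
  push_cast at h
  linear_combination -(-1) ^ (m₁ + m₂) * h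

theorem polyInt_rodrigues_mul_rodrigues {l₂ l₃ e : ℕ} (he : e ≤ l₂ + l₃) {z₂ z₃ : ℤ}
    (hz : z₂ + z₃ = e) :
    polyInt (rodrigues l₂ z₂ * rodrigues l₃ z₃) =
      (-1) ^ z₂ * e.factorial * rfact z₂ * rfact z₃ *
        polyInt ((X ^ 2 - 1) ^ l₂ * rodrigues l₃ e) := by
  rcases lt_or_ge z₂ 0 with hneg | hnonneg
  · simp [rodrigues_of_neg, rfact_of_neg, hneg]
  induction z₂, hnonneg using Int.leInduction generalizing z₃ with
  | base =>
    obtain rfl : z₃ = e := by lia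
    rw [rodrigues_zero, rfact_natCast, rfact_zero]
    field_simp
  | succ z hz₀ ih =>
    have hne : (z + 1 : ℝ) ≠ 0 := by exact_mod_cast (by lia : z + 1 ≠ 0)
    have hbdry {x : ℝ} (hx : x ^ 2 = 1) : (rodrigues l₂ z * rodrigues l₃ z₃).eval x = 0 := by
      rcases lt_or_ge z l₂ with h | h
      · rw [eval_mul, eval_rodrigues_eq_zero h hx, zero_mul]
      · rw [eval_mul, eval_rodrigues_eq_zero (l := l₃) (by lia) hx, mul_zero]
    have hparts : derivative (rodrigues l₂ z * rodrigues l₃ z₃) =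
        (z + 1 : ℤ) * (rodrigues l₂ (z + 1) * rodrigues l₃ z₃) +
        (z₃ + 1 : ℤ) * (rodrigues l₂ z * rodrigues l₃ (z₃ + 1)) := by
      rw [derivative_mul, derivative_rodrigues, derivative_rodrigues]
      push_cast
      ring
    have hint := congrArg polyInt hparts
    rw [polyInt_derivative, hbdry (one_pow 2), hbdry neg_one_sq, map_add, polyInt_intCast_mul,
      polyInt_intCast_mul, ih (z₃ := z₃ + 1) (by lia), rfact_eq_mul_rfact_add_one z] at hint
    rw [rfact_eq_mul_rfact_add_one z₃, zpow_add_one₀ (by norm_num)]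
    push_cast at hint
    apply mul_left_cancel₀ hne
    linear_combination -hint

theorem polyInt_mul_rodrigues_of_odd (l₂ l₃ : ℕ) {e : ℕ} (he : Odd e) :
    polyInt ((X ^ 2 - 1) ^ l₂ * rodrigues l₃ e) = 0 := by
  have h := polyInt_comp_neg_X ((X ^ 2 - 1) ^ l₂ * rodrigues l₃ e)
  rw [mul_comp, rodrigues_comp_neg_X, pow_comp, he.neg_one_pow, neg_one_mul, mul_neg, sub_comp,
    pow_comp, X_comp, one_comp, neg_sq, map_neg] at h
  exact self_eq_neg.1 h.symm

theorem polyInt_sq_sub_one_pow_succ (n : ℕ) :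
    (2 * n + 3) * polyInt ((X ^ 2 - 1) ^ (n + 1)) = -(2 * n + 2) * polyInt ((X ^ 2 - 1) ^ n) := by
  have hderiv : derivative (X * (X ^ 2 - 1 : ℝ[X]) ^ (n + 1)) =
      ((2 * n + 3 : ℤ) : ℝ[X]) * (X ^ 2 - 1) ^ (n + 1) +
        ((2 * n + 2 : ℤ) : ℝ[X]) * (X ^ 2 - 1) ^ n := by
    rw [derivative_mul, derivative_X, derivative_sq_sub_one_pow_succ]
    push_cast
    ring
  have hbdry {x : ℝ} (hx : x ^ 2 = 1) : (X * (X ^ 2 - 1 : ℝ[X]) ^ (n + 1)).eval x = 0 := by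
    simp [hx]
  have hint := congrArg polyInt hderiv
  rw [polyInt_derivative, hbdry (one_pow 2), hbdry neg_one_sq, map_add, polyInt_intCast_mul,
    polyInt_intCast_mul] at hint
  push_cast at hint
  linear_combination -hint

theorem polyInt_sq_sub_one_pow (n : ℕ) : polyInt ((X ^ 2 - 1) ^ n) =
    (-1) ^ n * 2 ^ (2 * n + 1) * n.factorial ^ 2 / (2 * n + 1).factorial := by
  induction n with
  | zero => norm_num [polyInt_apply]
  | succ n ih =>
    have hne : (2 * n + 3 : ℝ) ≠ 0 := by positivity
    apply mul_left_cancel₀ hne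
    rw [polyInt_sq_sub_one_pow_succ, ih, show 2 * (n + 1) + 1 = 2 * n + 1 + 1 + 1 by lia]
    simp only [Nat.factorial_succ]
    push_cast
    field_simp
    ring

theorem polyInt_mul_rodrigues_add_two (f : ℝ[X]) (l n : ℕ) :
    (n + 1) * (n + 2) * polyInt (f * rodrigues (l + 2) (n + 2)) =
      2 * (l + 2) * (2 * l + 3) * polyInt (f * rodrigues (l + 1) n) +
        4 * (l + 2) * (l + 1) * polyInt (f * rodrigues l n) := by
  have hrec : (((n + 1) * (n + 2) : ℤ) : ℝ[X]) * (f * rodrigues (l + 2) (n + 2)) =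
      ((2 * (l + 2) * (2 * l + 3) : ℤ) : ℝ[X]) * (f * rodrigues (l + 1) n) +
        ((4 * (l + 2) * (l + 1) : ℤ) : ℝ[X]) * (f * rodrigues l n) := by
    push_cast
    linear_combination f * rodrigues_add_two l n
  have hint := congrArg polyInt hrec
  rw [map_add, polyInt_intCast_mul, polyInt_intCast_mul, polyInt_intCast_mul] at hint
  exact_mod_cast hint

theorem polyInt_mul_rodrigues_even (a b c : ℕ) :
    polyInt ((X ^ 2 - 1) ^ (a + c) * rodrigues (a + b) (2 * a : ℕ)) =
      (-1) ^ (a + b + c) * 2 ^ (2 * (a + b + c) + 1) * (a + b).factorial * (a + c).factorial *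
        (b + c).factorial * (a + b + c).factorial /
        (a.factorial * b.factorial * c.factorial * (2 * (a + b + c) + 1).factorial) := by
  induction a generalizing b c with
  | zero =>
    rw [Nat.mul_zero, Nat.cast_zero, rodrigues_zero, ← pow_add, polyInt_sq_sub_one_pow,
      show 0 + c + (0 + b) = b + c by lia, zero_add, zero_add, Nat.factorial_zero]
    push_cast
    field_simp
  | succ a ih =>
    cases b with
    | zero =>
      rw [add_zero, rodrigues_two_mul, mul_one, polyInt_sq_sub_one_pow, zero_add,
        Nat.factorial_zero]
      push_cast
      field_simp
    | succ b =>
      have hne : (((2 * a : ℕ) + 1) * ((2 * a : ℕ) + 2) : ℝ) ≠ 0 := by positivity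
      apply mul_left_cancel₀ hne
      rw [show a + 1 + (b + 1) = a + b + 2 by lia, show a + 1 + c = a + (c + 1) by lia,
        show ((2 * (a + 1) : ℕ) : ℤ) = (2 * a : ℕ) + 2 by lia, polyInt_mul_rodrigues_add_two,
        add_assoc a b 1, ih, ih]
      simp only [show a + (b + 1) = a + b + 1 by lia, show a + (c + 1) = a + c + 1 by lia,
        show b + (c + 1) = b + c + 1 by lia, show b + 1 + c = b + c + 1 by lia,
        show b + 1 + (c + 1) = b + c + 2 by lia, show a + b + (c + 1) = a + b + c + 1 by lia,
        show a + b + 1 + (c + 1) = a + b + c + 2 by lia,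
        show a + b + 2 + c = a + b + c + 2 by lia,
        show 2 * (a + b + c + 2) + 1 = 2 * (a + b + c + 1) + 1 + 1 + 1 by lia]
      simp only [Nat.factorial_succ]
      push_cast
      field_simp
      ring

theorem tripleInt_eq_mul_racahSum {l₁ l₂ l₃ d₁ d₂ d₃ : ℕ} (hd₁ : l₁ + d₁ = l₂ + l₃)
    (hd₂ : l₂ + d₂ = l₁ + l₃) (hd₃ : l₃ + d₃ = l₁ + l₂) {m₁ m₂ m₃ : ℤ} (hm₁ : m₁ ≤ l₁)
    (hm : m₁ + m₂ + m₃ = 0) :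
    tripleInt l₁ l₂ l₃ (l₁ + m₁) (l₂ + m₂) (l₃ + m₃) =
      (-1) ^ m₃ * ((-1) ^ (l₁ + l₂) * (d₁.factorial * d₂.factorial * d₃.factorial) *
        polyInt ((X ^ 2 - 1) ^ l₂ * rodrigues l₃ d₁) * racahSum l₁ l₂ l₃ m₁ m₂) := by
  have hF := (isLowering_racahSum l₁ l₂ l₃).const_mul ((-1) ^ (l₁ + l₂) *
    (d₁.factorial * d₂.factorial * d₃.factorial) * polyInt ((X ^ 2 - 1) ^ l₂ * rodrigues l₃ d₁))
  have h := (isLowering_tripleInt l₁ l₂ l₃).eq_of_eq_top hF (fun m₂ ↦ ?_) hm₁ m₂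
  · rw [← h, show m₁ + m₂ = -m₃ by lia, show (l₃ - m₁ - m₂ : ℤ) = l₃ + m₃ by lia, ← mul_assoc,
      ← zpow_add₀ (by norm_num), add_neg_cancel, zpow_zero, one_mul]
  · have hsign : (-1 : ℝ) ^ (l₁ + m₂) * (-1) ^ (l₂ + m₂) = (-1) ^ (l₁ + l₂) := by
      rw [← zpow_add₀ (by norm_num), show (l₁ + m₂ + (l₂ + m₂) : ℤ) = (l₁ + l₂ : ℕ) + 2 * m₂ by lia,
        zpow_add₀ (by norm_num), zpow_mul, zpow_natCast]
      simp
    rw [← Nat.cast_add, ← two_mul, tripleInt, rodrigues_two_mul, one_mul,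
      polyInt_rodrigues_mul_rodrigues (e := d₁) (by lia) (by lia), racahSum_top, ← hsign,
      show (l₁ - l₂ + l₃ : ℤ) = d₂ by lia, show (l₁ + l₂ - l₃ : ℤ) = d₃ by lia,
      show (l₃ - l₁ - m₂ : ℤ) = l₃ - (l₁ + m₂) by lia, rfact_natCast, rfact_natCast]
    field_simp

theorem tripleInt_eq_zero_of_lt {l₁ l₂ l₃ : ℕ} (hlt : l₂ + l₃ < l₁) {m₁ m₂ m₃ : ℤ}
    (hm₁ : m₁ ≤ l₁) (hm : m₁ + m₂ + m₃ = 0) :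
    tripleInt l₁ l₂ l₃ (l₁ + m₁) (l₂ + m₂) (l₃ + m₃) = 0 := by
  have hzero : IsLowering l₁ l₂ l₃ fun _ _ ↦ 0 := by simp [IsLowering]
  have h := (isLowering_tripleInt l₁ l₂ l₃).eq_of_eq_top hzero (fun m₂ ↦ ?_) hm₁ m₂
  · rw [show (l₃ - m₁ - m₂ : ℤ) = l₃ + m₃ by lia] at h
    exact (mul_eq_zero.1 h).resolve_left (zpow_ne_zero _ (by norm_num))
  · rcases lt_or_ge (l₂ + m₂) 0 with hneg | _
    · simp [tripleInt, rodrigues_of_neg l₂ hneg]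
    · simp [tripleInt, rodrigues_of_neg l₃ (show l₃ - l₁ - m₂ < (0 : ℤ) by lia)]

theorem polyInt_mul_rodrigues_eq_racahSum_zero_zero {l₁ l₂ l₃ d₁ d₂ d₃ : ℕ}
    (hd₁ : l₁ + d₁ = l₂ + l₃) (hd₂ : l₂ + d₂ = l₁ + l₃) (hd₃ : l₃ + d₃ = l₁ + l₂) :
    (-1) ^ (l₁ + l₂) * polyInt ((X ^ 2 - 1) ^ l₂ * rodrigues l₃ d₁) =
      2 ^ (l₁ + l₂ + l₃ + 1) * (l₁.factorial * l₂.factorial * l₃.factorial) ^ 2 /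
        (l₁ + l₂ + l₃ + 1).factorial * racahSum l₁ l₂ l₃ 0 0 := by
  rcases Nat.even_or_odd' d₁ with ⟨a, rfl | rfl⟩
  · obtain ⟨b, rfl⟩ : ∃ b, l₃ = a + b := ⟨l₃ - a, by lia⟩
    obtain ⟨c, rfl⟩ : ∃ c, l₂ = a + c := ⟨l₂ - a, by lia⟩
    obtain rfl : l₁ = b + c := by lia
    rw [polyInt_mul_rodrigues_even, racahSum_zero_zero,
      show b + c + (a + c) + (a + b) + 1 = 2 * (a + b + c) + 1 by lia,
      show b + c + (a + c) = a + b + 2 * c by lia, pow_add (-1 : ℝ) (a + b) (2 * c),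
      pow_mul (-1 : ℝ) 2 c, pow_add (-1 : ℝ) (a + b) c]
    field_simp
    rw [pow_right_comm, neg_one_sq, one_pow, one_pow, mul_one]
  · rw [polyInt_mul_rodrigues_of_odd l₂ l₃ (odd_two_mul_add_one a),
      racahSum_zero_zero_of_odd (by lia) (by grind), mul_zero, mul_zero]

end Rodrigues

/-! ### 3-j symbols -/

/-- The normalisation `√((l - m)! (l + m)!)` of a state of degree `l` and order `m`. -/
noncomputable def orderNorm (l : ℕ) (m : ℤ) : ℝ :=
  √(fact' (l - m) * fact' (l + m))

theorem orderNorm_zero (l : ℕ) : orderNorm l 0 = l.factorial := by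
  rw [orderNorm, sub_zero, add_zero, fact'_natCast, Real.sqrt_mul_self (by positivity)]

theorem w3j_eq_racahSum {l₁ l₂ l₃ d₁ d₂ d₃ : ℕ} (hd₁ : l₁ + d₁ = l₂ + l₃)
    (hd₂ : l₂ + d₂ = l₁ + l₃) (hd₃ : l₃ + d₃ = l₁ + l₂) {m₁ m₂ m₃ : ℤ} (hm₁ : |m₁| ≤ l₁)
    (hm₂ : |m₂| ≤ l₂) (hm₃ : |m₃| ≤ l₃) (hm : m₁ + m₂ + m₃ = 0) :
    w3j l₁ l₂ l₃ m₁ m₂ m₃ = (-1) ^ (l₁ - l₂ - m₃ : ℤ) *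
      √((d₁.factorial * d₂.factorial * d₃.factorial) / (l₁ + l₂ + l₃ + 1).factorial) *
      (orderNorm l₁ m₁ * orderNorm l₂ m₂ * orderNorm l₃ m₃) * racahSum l₁ l₂ l₃ m₁ m₂ := by
  have hsqrt : √((d₁.factorial * d₂.factorial * d₃.factorial) / (l₁ + l₂ + l₃ + 1).factorial) *
      (orderNorm l₁ m₁ * orderNorm l₂ m₂ * orderNorm l₃ m₃) =
      √(d₃.factorial * d₂.factorial * d₁.factorial * fact' (l₁ - m₁) * fact' (l₁ + m₁) *
        fact' (l₂ - m₂) * fact' (l₂ + m₂) * fact' (l₃ - m₃) * fact' (l₃ + m₃) /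
        (l₁ + l₂ + l₃ + 1).factorial) := by
    have hnonneg (l : ℕ) (m : ℤ) : 0 ≤ fact' (l - m) * fact' (l + m) :=
      mul_nonneg (fact'_nonneg _) (fact'_nonneg _)
    rw [orderNorm, orderNorm, orderNorm, ← Real.sqrt_mul (hnonneg l₁ m₁),
      ← Real.sqrt_mul' _ (hnonneg l₃ m₃), ← Real.sqrt_mul (by positivity)]
    congr 1
    ring
  have hsum (t : ℕ) : racahTerm l₁ l₂ l₃ m₁ m₂ t = (-1 : ℝ) ^ t /
      (fact' t * fact' (l₃ - l₂ + m₁ + t) * fact' (l₃ - l₁ - m₂ + t) * fact' (l₁ + l₂ - l₃ - t) *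
        fact' (l₁ - m₁ - t) * fact' (l₂ + m₂ - t)) := by
    simp only [racahTerm, rfact, div_eq_mul_inv, mul_inv]
  rw [w3j, if_pos ⟨hm, hm₁, hm₂, hm₃, by lia, abs_le.2 ⟨by lia, by lia⟩⟩,
    mul_assoc ((-1) ^ _) (√_) (_ * _ * _), hsqrt, racahSum, Finset.sum_congr rfl fun t _ ↦ hsum t,
    show (l₁ + l₂ - l₃ : ℤ) = d₃ by lia, show (l₁ - l₂ + l₃ : ℤ) = d₂ by lia,
    show (-l₁ + l₂ + l₃ : ℤ) = d₁ by lia,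
    show (l₁ + l₂ + l₃ + 1 : ℤ) = (l₁ + l₂ + l₃ + 1 : ℕ) by lia]
  simp only [fact'_natCast]

theorem w3j_zero_mul_w3j {l₁ l₂ l₃ d₁ d₂ d₃ : ℕ} (hd₁ : l₁ + d₁ = l₂ + l₃)
    (hd₂ : l₂ + d₂ = l₁ + l₃) (hd₃ : l₃ + d₃ = l₁ + l₂) {m₁ m₂ m₃ : ℤ} (hm₁ : |m₁| ≤ l₁)
    (hm₂ : |m₂| ≤ l₂) (hm₃ : |m₃| ≤ l₃) (hm : m₁ + m₂ + m₃ = 0) :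
    w3j l₁ l₂ l₃ 0 0 0 * w3j l₁ l₂ l₃ m₁ m₂ m₃ = (-1) ^ m₃ *
      (d₁.factorial * d₂.factorial * d₃.factorial) / (l₁ + l₂ + l₃ + 1).factorial *
      (l₁.factorial * l₂.factorial * l₃.factorial) *
      (orderNorm l₁ m₁ * orderNorm l₂ m₂ * orderNorm l₃ m₃) *
      (racahSum l₁ l₂ l₃ 0 0 * racahSum l₁ l₂ l₃ m₁ m₂) := by
  have hsign : (-1 : ℝ) ^ (l₁ - l₂ - 0 : ℤ) * (-1) ^ (l₁ - l₂ - m₃ : ℤ) = (-1) ^ m₃ := by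
    rw [← zpow_add₀ (by norm_num),
      show (l₁ - l₂ - 0 + (l₁ - l₂ - m₃) : ℤ) = m₃ + 2 * (l₁ - l₂ - m₃) by lia,
      zpow_add₀ (by norm_num), zpow_mul]
    simp
  have hsqrt : √((d₁.factorial * d₂.factorial * d₃.factorial : ℝ) /
      (l₁ + l₂ + l₃ + 1).factorial) ^ 2 =
      (d₁.factorial * d₂.factorial * d₃.factorial) / (l₁ + l₂ + l₃ + 1).factorial :=
    Real.sq_sqrt (by positivity)
  rw [w3j_eq_racahSum hd₁ hd₂ hd₃ (by simp) (by simp) (by simp) (by simp),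
    w3j_eq_racahSum hd₁ hd₂ hd₃ hm₁ hm₂ hm₃ hm, orderNorm_zero, orderNorm_zero, orderNorm_zero,
    ← hsign]
  linear_combination (-1) ^ (l₁ - l₂ - 0 : ℤ) * (-1) ^ (l₁ - l₂ - m₃ : ℤ) *
    (l₁.factorial * l₂.factorial * l₃.factorial) *
    (orderNorm l₁ m₁ * orderNorm l₂ m₂ * orderNorm l₃ m₃) *
    (racahSum l₁ l₂ l₃ 0 0 * racahSum l₁ l₂ l₃ m₁ m₂) * hsqrt

theorem w3j_eq_zero_of_lt {l₁ l₂ l₃ : ℕ} (h : l₂ + l₃ < l₁ ∨ l₁ + l₃ < l₂ ∨ l₁ + l₂ < l₃)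
    (m₁ m₂ m₃ : ℤ) : w3j l₁ l₂ l₃ m₁ m₂ m₃ = 0 := by
  refine if_neg fun ⟨_, _, _, _, _, habs⟩ ↦ ?_
  rw [abs_le] at habs
  lia

theorem orderNorm_mul_tripleInt {l₁ l₂ l₃ : ℕ} {m₁ m₂ m₃ : ℤ} (hm₁ : |m₁| ≤ l₁)
    (hm₂ : |m₂| ≤ l₂) (hm₃ : |m₃| ≤ l₃) (hm : m₁ + m₂ + m₃ = 0) :
    orderNorm l₁ m₁ * orderNorm l₂ m₂ * orderNorm l₃ m₃ *
        tripleInt l₁ l₂ l₃ (l₁ + m₁) (l₂ + m₂) (l₃ + m₃) =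
      2 ^ (l₁ + l₂ + l₃ + 1) * (l₁.factorial * l₂.factorial * l₃.factorial) *
        (w3j l₁ l₂ l₃ 0 0 0 * w3j l₁ l₂ l₃ m₁ m₂ m₃) := by
  have hle₁ := le_of_abs_le hm₁
  have hle₂ := le_of_abs_le hm₂
  have hle₃ := le_of_abs_le hm₃
  by_cases h₁ : l₂ + l₃ < l₁
  · rw [tripleInt_eq_zero_of_lt h₁ hle₁ hm, w3j_eq_zero_of_lt (.inl h₁)]
    ring
  by_cases h₂ : l₁ + l₃ < l₂
  · rw [tripleInt_swap, tripleInt_eq_zero_of_lt h₂ hle₂ (by lia),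
      w3j_eq_zero_of_lt (.inr (.inl h₂))]
    ring
  by_cases h₃ : l₁ + l₂ < l₃
  · rw [tripleInt_rotate, tripleInt_eq_zero_of_lt h₃ hle₃ (by lia),
      w3j_eq_zero_of_lt (.inr (.inr h₃))]
    ring
  obtain ⟨d₁, hd₁⟩ : ∃ d₁, l₁ + d₁ = l₂ + l₃ := Nat.le.dest (not_lt.1 h₁)
  obtain ⟨d₂, hd₂⟩ : ∃ d₂, l₂ + d₂ = l₁ + l₃ := Nat.le.dest (not_lt.1 h₂)
  obtain ⟨d₃, hd₃⟩ : ∃ d₃, l₃ + d₃ = l₁ + l₂ := Nat.le.dest (not_lt.1 h₃)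
  rw [w3j_zero_mul_w3j hd₁ hd₂ hd₃ hm₁ hm₂ hm₃ hm,
    tripleInt_eq_mul_racahSum hd₁ hd₂ hd₃ hle₁ hm]
  linear_combination (orderNorm l₁ m₁ * orderNorm l₂ m₂ * orderNorm l₃ m₃) * (-1) ^ m₃ *
    (d₁.factorial * d₂.factorial * d₃.factorial) * racahSum l₁ l₂ l₃ m₁ m₂ *
    polyInt_mul_rodrigues_eq_racahSum_zero_zero hd₁ hd₂ hd₃

/-! ### Spherical harmonics -/

theorem iteratedDeriv_sq_sub_one_pow (l n : ℕ) (x : ℝ) :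
    iteratedDeriv n (fun y : ℝ ↦ (y ^ 2 - 1) ^ l) x = n.factorial * (rodrigues l n).eval x := by
  induction n generalizing x with
  | zero => simp [rodrigues_zero]
  | succ n ih =>
    rw [iteratedDeriv_succ, funext ih, deriv_const_mul_field, Polynomial.deriv,
      derivative_rodrigues, Polynomial.eval_mul, Nat.factorial_succ]
    simp only [Polynomial.eval_add, Polynomial.eval_intCast, Polynomial.eval_one]
    push_cast
    ring

/-- The factor depending on the polar angle in the spherical harmonic of degree `l` and order
`m`. -/
noncomputable def polarPart (l : ℕ) (m : ℤ) (θ : ℝ) : ℝ :=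
  √((2 * l + 1) / (4 * π) * (fact' (l - m) / fact' (l + m))) * assocLegendre l m (Real.cos θ)

theorem assocLegendre_cos {l : ℕ} {m : ℤ} (hm : -l ≤ m) {θ : ℝ} (hθ : 0 ≤ Real.sin θ) :
    assocLegendre l m (Real.cos θ) = (-1) ^ m / (2 ^ l * l.factorial) * Real.sin θ ^ m *
      (fact' (l + m) * (rodrigues l (l + m)).eval (Real.cos θ)) := by
  have hsin : (1 - Real.cos θ ^ 2) ^ (m / 2 : ℝ) = Real.sin θ ^ m := by
    rw [← Real.sin_sq, ← Real.rpow_natCast, ← Real.rpow_mul hθ, Nat.cast_ofNat,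
      mul_div_cancel₀ _ two_ne_zero, Real.rpow_intCast]
  obtain ⟨n, hn⟩ : ∃ n : ℕ, l + m = n := Int.eq_ofNat_of_zero_le (by lia)
  rw [assocLegendre, hsin, iteratedDeriv_sq_sub_one_pow, add_comm m, hn, Int.toNat_natCast,
    fact'_natCast]

theorem sqrt_fact'_div_mul_fact' (l : ℕ) {m : ℤ} (hm : -l ≤ m) :
    √(fact' (l - m) / fact' (l + m)) * fact' (l + m) = orderNorm l m := by
  have hpos : 0 < fact' (l + m) := fact'_pos (by lia)
  rw [orderNorm, Real.sqrt_div' _ hpos.le, Real.sqrt_mul' _ hpos.le, div_mul_eq_mul_div,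
    mul_div_assoc, Real.div_sqrt]

theorem polarPart_eq {l : ℕ} {m : ℤ} (hm : -l ≤ m) {θ : ℝ} (hθ : 0 ≤ Real.sin θ) :
    polarPart l m θ = √((2 * l + 1) / (4 * π)) * orderNorm l m / (2 ^ l * l.factorial) *
      ((-1) ^ m * Real.sin θ ^ m * (rodrigues l (l + m)).eval (Real.cos θ)) := by
  rw [polarPart, assocLegendre_cos hm hθ, Real.sqrt_mul (by positivity),
    ← sqrt_fact'_div_mul_fact' l hm]
  ring

theorem orderNorm_neg (l : ℕ) (m : ℤ) : orderNorm l (-m) = orderNorm l m := by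
  rw [orderNorm, orderNorm, sub_neg_eq_add, ← sub_eq_add_neg, mul_comm]

theorem polarPart_neg {l m : ℕ} (hm : m ≤ l) {θ : ℝ} (hθ : 0 ≤ Real.sin θ) :
    polarPart l (-m) θ = (-1) ^ m * polarPart l m θ := by
  have heval : (rodrigues l (l - m)).eval (Real.cos θ) =
      (-1) ^ m * (Real.sin θ ^ m) ^ 2 * (rodrigues l (l + m)).eval (Real.cos θ) := by
    rw [rodrigues_sub, Polynomial.eval_mul, Polynomial.eval_pow, pow_right_comm, Real.sin_sq,
      ← mul_pow]
    simp
  have hsin : (Real.sin θ ^ m)⁻¹ * Real.sin θ ^ m * Real.sin θ ^ m = Real.sin θ ^ m :=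
    inv_mul_mul_self _
  rw [polarPart_eq (by lia) hθ, polarPart_eq (by lia) hθ, orderNorm_neg, ← sub_eq_add_neg, heval,
    zpow_neg, zpow_neg, zpow_natCast, zpow_natCast, ← inv_pow, inv_neg_one]
  linear_combination √((2 * l + 1) / (4 * π)) * orderNorm l m / (2 ^ l * l.factorial) *
    ((-1) ^ m * (-1) ^ m * (rodrigues l (l + m)).eval (Real.cos θ)) * hsin

theorem re_Ysph (l : ℕ) (m : ℤ) (θ φ : ℝ) :
    (Ysph l m θ φ).re = polarPart l m θ * Real.cos (m * φ) := by
  rw [Ysph, ← polarPart, Complex.re_ofReal_mul, mul_assoc, mul_comm Complex.I,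
    ← Complex.exp_ofReal_mul_I_re]
  push_cast
  rfl

theorem Yre_zero (l : ℕ) (θ φ : ℝ) : Yre l 0 θ φ = polarPart l 0 θ := by
  simp [Yre, re_Ysph]

theorem Yre_natCast {l m : ℕ} (hm : 0 < m) (hml : m ≤ l) {θ : ℝ} (hθ : 0 ≤ Real.sin θ) (φ : ℝ) :
    Yre l m θ φ = √2 * polarPart l (-m) θ * Real.cos (m * φ) := by
  have hre : Yre l m θ φ = 1 / √2 * ((Ysph l (-m) θ φ).re + (-1) ^ m * (Ysph l m θ φ).re) := by
    rw [Yre, if_neg (by lia), if_neg (by lia), ← Complex.re_ofReal_mul, ← Complex.add_re,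
      ← Complex.re_ofReal_mul]
    push_cast
    rw [zpow_natCast]
  have hsqrt : √2 ^ 2 = 2 := Real.sq_sqrt zero_le_two
  rw [hre, re_Ysph, re_Ysph, polarPart_neg hml hθ, Int.cast_neg, Int.cast_natCast, neg_mul,
    Real.cos_neg]
  field_simp
  rw [hsqrt]
  ring

theorem integral_cos_intCast_mul (n : ℤ) :
    ∫ φ in (0 : ℝ)..(2 * π), Real.cos (n * φ) = if n = 0 then 2 * π else 0 := by
  split_ifs with hn
  · simp [hn]
  · have hsin : Real.sin (n * (2 * π)) = 0 := by
      rw [← mul_assoc]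
      exact_mod_cast Real.sin_int_mul_pi (n * 2)
    rw [intervalIntegral.integral_comp_mul_left Real.cos (by exact_mod_cast hn), integral_cos, hsin]
    simp

theorem integral_cos_mul_cos {q m : ℕ} (hm : 0 < m) :
    ∫ φ in (0 : ℝ)..(2 * π), Real.cos (q * φ) * Real.cos (m * φ) = if q = m then π else 0 := by
  have hprod (φ : ℝ) : Real.cos (q * φ) * Real.cos (m * φ) =
      (Real.cos ((q - m : ℤ) * φ) + Real.cos ((q + m : ℤ) * φ)) / 2 := by
    push_cast
    rw [sub_mul, add_mul, Real.cos_sub, Real.cos_add]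
    ring
  have hint (n : ℤ) :
      IntervalIntegrable (fun φ : ℝ ↦ Real.cos (n * φ)) MeasureTheory.volume 0 (2 * π) :=
    Continuous.intervalIntegrable (by fun_prop) _ _
  simp only [hprod]
  rw [intervalIntegral.integral_div, intervalIntegral.integral_add (hint _) (hint _),
    integral_cos_intCast_mul, integral_cos_intCast_mul,
    if_neg (show (q + m : ℤ) ≠ 0 by lia), add_zero, ite_div, zero_div,
    mul_div_cancel_left₀ _ two_ne_zero]
  simp only [sub_eq_zero, Nat.cast_inj]

theorem integral_eval_cos_mul_sin (f : Polynomial ℝ) :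
    ∫ θ in (0 : ℝ)..π, f.eval (Real.cos θ) * Real.sin θ = polyInt f := by
  have h := intervalIntegral.integral_comp_mul_deriv (a := 0) (b := π) (f := Real.cos)
    (f' := fun θ ↦ -Real.sin θ) (g := fun x ↦ f.eval x)
    (fun θ _ ↦ Real.hasDerivAt_cos θ) (by fun_prop) f.continuous
  simp only [Function.comp_apply, mul_neg, intervalIntegral.integral_neg, Real.cos_zero,
    Real.cos_pi] at h
  rw [polyInt_apply, intervalIntegral.integral_symm 1 (-1), ← h, neg_neg]

theorem polarPart_mul_polarPart_mul_polarPart_mul_sin {l₁ l₂ l₃ : ℕ} {m₁ m₂ m₃ : ℤ}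
    (hm₁ : -l₁ ≤ m₁) (hm₂ : -l₂ ≤ m₂) (hm₃ : -l₃ ≤ m₃) (hm : m₁ + m₂ + m₃ = 0) {θ : ℝ}
    (hθ : 0 ≤ Real.sin θ) :
    polarPart l₁ m₁ θ * polarPart l₂ m₂ θ * polarPart l₃ m₃ θ * Real.sin θ =
      √((2 * l₁ + 1) / (4 * π)) * √((2 * l₂ + 1) / (4 * π)) * √((2 * l₃ + 1) / (4 * π)) *
        (orderNorm l₁ m₁ * orderNorm l₂ m₂ * orderNorm l₃ m₃) /
        (2 ^ (l₁ + l₂ + l₃) * (l₁.factorial * l₂.factorial * l₃.factorial)) *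
        ((rodrigues l₁ (l₁ + m₁) * rodrigues l₂ (l₂ + m₂) * rodrigues l₃ (l₃ + m₃)).eval
          (Real.cos θ) * Real.sin θ) := by
  rcases hθ.eq_or_lt' with hzero | hpos
  · rw [hzero, mul_zero, mul_zero, mul_zero]
  have hpow {x : ℝ} (hx : x ≠ 0) : x ^ m₁ * x ^ m₂ * x ^ m₃ = 1 := by
    rw [← zpow_add₀ hx, ← zpow_add₀ hx, hm, zpow_zero]
  have hsign := hpow (neg_ne_zero.2 one_ne_zero)
  have hsin := hpow hpos.ne'
  rw [polarPart_eq hm₁ hθ, polarPart_eq hm₂ hθ, polarPart_eq hm₃ hθ, Polynomial.eval_mul,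
    Polynomial.eval_mul, pow_add, pow_add]
  linear_combination √((2 * l₁ + 1) / (4 * π)) * √((2 * l₂ + 1) / (4 * π)) *
    √((2 * l₃ + 1) / (4 * π)) * (orderNorm l₁ m₁ * orderNorm l₂ m₂ * orderNorm l₃ m₃) /
    (2 ^ l₁ * 2 ^ l₂ * 2 ^ l₃ * (l₁.factorial * l₂.factorial * l₃.factorial)) *
    ((rodrigues l₁ (l₁ + m₁)).eval (Real.cos θ) * (rodrigues l₂ (l₂ + m₂)).eval (Real.cos θ) *
      (rodrigues l₃ (l₃ + m₃)).eval (Real.cos θ) * Real.sin θ) *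
    (Real.sin θ ^ m₁ * Real.sin θ ^ m₂ * Real.sin θ ^ m₃ * hsign + hsin)

theorem integral_polarPart_mul {l₁ l₂ l₃ : ℕ} {m₁ m₂ m₃ : ℤ} (hm₁ : |m₁| ≤ l₁) (hm₂ : |m₂| ≤ l₂)
    (hm₃ : |m₃| ≤ l₃) (hm : m₁ + m₂ + m₃ = 0) :
    ∫ θ in (0 : ℝ)..π, polarPart l₁ m₁ θ * polarPart l₂ m₂ θ * polarPart l₃ m₃ θ * Real.sin θ =
      2 * (√((2 * l₁ + 1) / (4 * π)) * √((2 * l₂ + 1) / (4 * π)) * √((2 * l₃ + 1) / (4 * π))) *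
        (w3j l₁ l₂ l₃ 0 0 0 * w3j l₁ l₂ l₃ m₁ m₂ m₃) := by
  rw [intervalIntegral.integral_congr fun θ hθ ↦ polarPart_mul_polarPart_mul_polarPart_mul_sin
      (neg_le_of_abs_le hm₁) (neg_le_of_abs_le hm₂) (neg_le_of_abs_le hm₃) hm
      (Real.sin_nonneg_of_mem_Icc (Set.uIcc_of_le Real.pi_nonneg ▸ hθ)),
    intervalIntegral.integral_const_mul, integral_eval_cos_mul_sin, ← tripleInt,
    div_mul_eq_mul_div, mul_assoc (√_ * √_ * √_), orderNorm_mul_tripleInt hm₁ hm₂ hm₃ hm, pow_succ]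
  field_simp

theorem integral_Yre_mul {p k l q m : ℕ} (hq : 0 < q) (hqp : q ≤ p) (hm : 0 < m) (hmk : m ≤ k)
    {θ : ℝ} (hθ : 0 ≤ Real.sin θ) :
    ∫ φ in (0 : ℝ)..(2 * π), Yre p q θ φ * Yre k m θ φ * Yre l 0 θ φ * Real.sin θ =
      (if q = m then 1 else 0) * (2 * π * (-1) ^ q *
        (polarPart p q θ * polarPart k (-m) θ * polarPart l 0 θ * Real.sin θ)) := by
  have hsqrt : √2 ^ 2 = 2 := Real.sq_sqrt zero_le_two
  have hsep (φ : ℝ) : Yre p q θ φ * Yre k m θ φ * Yre l 0 θ φ * Real.sin θ =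
      2 * (-1) ^ q * (polarPart p q θ * polarPart k (-m) θ * polarPart l 0 θ * Real.sin θ) *
        (Real.cos (q * φ) * Real.cos (m * φ)) := by
    rw [Yre_natCast hq hqp hθ, Yre_natCast hm hmk hθ, Yre_zero, polarPart_neg hqp hθ]
    linear_combination (-1) ^ q * (polarPart p q θ * polarPart k (-m) θ * polarPart l 0 θ *
      Real.sin θ) * (Real.cos (q * φ) * Real.cos (m * φ)) * hsqrt
  simp only [hsep]
  rw [intervalIntegral.integral_const_mul, integral_cos_mul_cos hm]
  split_ifs <;> ring

theorem tripleProduct_n_zero_general (p k l : ℕ) (q m : ℤ) (hq : 0 < q) (hqp : q ≤ p)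
    (hm : 0 < m) (hmk : m ≤ k) :
    sphInt (fun θ φ ↦ Yre p q θ φ * Yre k m θ φ * Yre l 0 θ φ) =
      (if q = m then 1 else 0) * (√(2 * p + 1) * √(2 * k + 1) * √(2 * l + 1) / √(4 * π)) *
        (-1) ^ q * w3j p k l 0 0 0 * w3j p k l m (-m) 0 := by
  lift q to ℕ using hq.le
  lift m to ℕ using hm.le
  norm_cast at hq hqp hm hmk
  have hinner : ∀ θ ∈ Set.uIcc 0 π, _ := fun θ hθ ↦ integral_Yre_mul (l := l) hq hqp hm hmk
    (Real.sin_nonneg_of_mem_Icc (Set.uIcc_of_le Real.pi_nonneg ▸ hθ))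
  rw [sphInt, intervalIntegral.integral_congr hinner, intervalIntegral.integral_const_mul]
  obtain rfl | hqm := eq_or_ne q m
  · have hpi : √(4 * π) ^ 2 = 4 * π := Real.sq_sqrt (by positivity)
    rw [intervalIntegral.integral_const_mul, integral_polarPart_mul (by simpa) (by simpa) (by simp)
      (by simp), Real.sqrt_div' _ (by positivity), Real.sqrt_div' _ (by positivity),
      Real.sqrt_div' _ (by positivity), if_pos rfl, if_pos rfl, zpow_natCast]
    field_simp
    rw [mul_comm π 4, hpi]
    ring
  · rw [if_neg hqm, if_neg (by exact_mod_cast hqm)]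
    ring

/-- For `q > 0`, `m > 0`, `n = 0`:
`W^{p,k}_{q,m,0} = δ_{q,m} C_{p,k} (−1)^q (p k k; 0 0 0)(p k k; m −m 0)`, where
`C_{p,k} = (2k+1)√(2p+1)/√(4π)`. -/
theorem tripleProduct_n_zero (p k : ℕ) (q m : ℤ)
    (hq : 0 < q) (hq' : q ≤ (p : ℤ)) (hm : 0 < m) (hm' : m ≤ (k : ℤ)) :
    sphInt (fun θ φ => Yre p q θ φ * Yre k m θ φ * Yre k 0 θ φ) =
      (if q = m then 1 else 0) *
        ((2 * (k : ℝ) + 1) * Real.sqrt (2 * p + 1) / Real.sqrt (4 * Real.pi)) *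
        (-1 : ℝ) ^ q * w3j p k k 0 0 0 * w3j p k k m (-m) 0 := by
  rw [tripleProduct_n_zero_general p k k q m hq hq' hm hm', mul_comm √(2 * p + 1),
    mul_right_comm √(2 * k + 1), Real.mul_self_sqrt (by positivity)]
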